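/- arXiv:2205.14343 — 11 statements merged into one kernel-verified Lean document; each statement's English description precedes it below -/
import Mathlib

section
/- Let M be a magma whose binary operation * satisfies the identities (x*y)*z = x*x and x*(y*z) = x*x for all x,y,z (the variety L₁). Then M satisfies x*x = y*y for all x,y (the identity D) if and only if M avoids the 2-element left zero band 2_LZ, i.e. there do not exist distinct elements a,b of M with a*a = a, a*b = a, b*a = b, b*b = b. -/
section Magma

variable {M : Type*} {f : M → M → M}

theorem eq_of_idempotent_of_squares_eq (hD : ∀ x y : M, f x x = f y y) {a b : M}
    (ha : f a a = a) (hb : f b b = b) : a = b :=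
  calc
    a = f a a := ha.symm
    _ = f b b := hD a b
    _ = b := hb

theorem exists_leftZero_pair_of_squares_ne (hsq : ∀ x y : M, f (f x x) (f y y) = f x x) {x y : M}
    (hne : f x x ≠ f y y) :
    ∃ a0 a1 : M, a0 ≠ a1 ∧ f a0 a0 = a0 ∧ f a0 a1 = a0 ∧ f a1 a0 = a1 ∧ f a1 a1 = a1 :=
  ⟨f x x, f y y, hne, hsq x x, hsq x y, hsq y x, hsq y y⟩

end Magma

theorem stmt_0_general {M : Type*} (f : M → M → M)
    (hsq : ∀ x y : M, f (f x x) (f y y) = f x x) :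
    (∀ x y : M, f x x = f y y) ↔
      (¬ ∃ a0 a1 : M, a0 ≠ a1 ∧ f a0 a0 = a0 ∧ f a0 a1 = a0 ∧ f a1 a0 = a1 ∧ f a1 a1 = a1) := by
  constructor
  · rintro hD ⟨a, b, hne, ha, -, -, hb⟩
    exact hne (eq_of_idempotent_of_squares_eq hD ha hb)
  · intro havoid x y
    by_contra hne
    exact havoid (exists_leftZero_pair_of_squares_ne hsq hne)

theorem stmt_0 {M : Type*} (f : M → M → M)
    (hL1a : ∀ x y z : M, f (f x y) z = f x x)
    (hL1b : ∀ x y z : M, f x (f y z) = f x x)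
    :
    (∀ x y : M, f x x = f y y) ↔
      (¬ ∃ a0 a1 : M, a0 ≠ a1 ∧ f a0 a0 = a0 ∧ f a0 a1 = a0 ∧ f a1 a0 = a1 ∧ f a1 a1 = a1) :=
  stmt_0_general f fun x y ↦ hL1a x x (f y y)
end

section
/- Let M be a magma whose binary operation * satisfies the identities (x*y)*z = x*z and x*(y*z) = x*z for all x,y,z (the variety L₇). Then M satisfies the rectangular band identities (x*y)*z = x*(y*z) and x*(y*x) = x for all x,y,z if and only if M avoids the 2-element null semigroup 2_N, i.e. there do not exist distinct elements a,b of M with a*a = a, a*b = a, b*a = a, b*b = a. -/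
/-!
Since `x * (y * x) = x * x` in `L₇`, a member of `L₇` is a rectangular band exactly when it is
idempotent. A copy of `2_N` contains the non-idempotent element `1`. Conversely, in `L₇` the square
`x * x` multiplies on either side just as `x` does, so all products of `x` and `x * x` are equal to
`x * x`, and a non-idempotent `x` yields the copy `{x * x, x}` of `2_N`.
-/

section

variable {M : Type*} {f : M → M → M}

/-- The elements `a` and `b` form a copy of the null semigroup `2_N` in the magma `(M, f)`,
with `a` in the role of the zero `0` and `b` in that of `1`. -/
def IsNullPair (f : M → M → M) (a b : M) : Prop :=
  a ≠ b ∧ f a a = a ∧ f a b = a ∧ f b a = a ∧ f b b = a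

theorem IsNullPair.op_self_ne {a b : M} (h : IsNullPair f a b) : f b b ≠ b := by
  obtain ⟨hne, -, -, -, hbb⟩ := h
  rwa [hbb]

theorem isNullPair_op_self {x : M} (hleft : ∀ y, f (f x x) y = f x y)
    (hright : ∀ y, f y (f x x) = f y x) (hx : f x x ≠ x) : IsNullPair f (f x x) x :=
  ⟨hx, (hleft _).trans (hright x), hleft x, hright x, rfl⟩

theorem idempotentOp_iff_not_exists_isNullPair (hleft : ∀ x y, f (f x x) y = f x y)
    (hright : ∀ x y, f y (f x x) = f y x) :
    Std.IdempotentOp f ↔ ¬ ∃ a b, IsNullPair f a b := by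
  constructor
  · rintro ⟨hidem⟩ ⟨a, b, hab⟩
    exact hab.op_self_ne (hidem b)
  · intro havoids
    refine ⟨fun x => ?_⟩
    by_contra hx
    exact havoids ⟨f x x, x, isNullPair_op_self (hleft x) (hright x) hx⟩

theorem op_op_eq_self_iff_idempotentOp (hb : ∀ x y z, f x (f y z) = f x z) :
    (∀ x y, f x (f y x) = x) ↔ Std.IdempotentOp f where
  mp h := ⟨fun x => (hb x x x).symm.trans (h x x)⟩
  mpr h x y := (hb x y x).trans (h.idempotent x)

theorem op_assoc_of_op_eq_outer (ha : ∀ x y z, f (f x y) z = f x z)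
    (hb : ∀ x y z, f x (f y z) = f x z) (x y z : M) : f (f x y) z = f x (f y z) :=
  (ha x y z).trans (hb x y z).symm

end

theorem stmt_1 {M : Type*} (f : M → M → M)
    (hL7a : ∀ x y z : M, f (f x y) z = f x z)
    (hL7b : ∀ x y z : M, f x (f y z) = f x z)
    :
    ((∀ x y z : M, f (f x y) z = f x (f y z)) ∧ (∀ x y : M, f x (f y x) = x)) ↔
      (¬ ∃ a0 a1 : M, a0 ≠ a1 ∧ f a0 a0 = a0 ∧ f a0 a1 = a0 ∧ f a1 a0 = a0 ∧ f a1 a1 = a0) := by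
  rw [and_iff_right (op_assoc_of_op_eq_outer hL7a hL7b), op_op_eq_self_iff_idempotentOp hL7b]
  exact idempotentOp_iff_not_exists_isNullPair (fun x => hL7a x x) (fun x y => hL7b y x x)
end

section
/- Let M be a magma whose binary operation * satisfies the identities x*y = x*z and (x*y)*z = x*y for all x,y,z (the variety U). Then M satisfies x*y = z*u for all x,y,z,u (the identity Z) if and only if M avoids the 2-element left zero band 2_LZ, i.e. there do not exist distinct elements a,b of M with a*a = a, a*b = a, b*a = b, b*b = b. -/
section LeftZero

variable {M : Type*} {f : M → M → M} {a b : M}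

/-- `a` is a left zero of the magma `(M, f)`: it absorbs every right factor. Two distinct left
zeros form a copy of the two-element left zero band. -/
def IsLeftZero (f : M → M → M) (a : M) : Prop :=
  ∀ z, f a z = a

theorem eq_of_idempotent_of_constant (hf : ∀ x y z u, f x y = f z u)
    (ha : f a a = a) (hb : f b b = b) : a = b :=
  calc
    a = f a a := ha.symm
    _ = f b b := hf a a b b
    _ = b := hb

theorem IsLeftZero.eq_of_avoids_leftZeroBand (ha : IsLeftZero f a) (hb : IsLeftZero f b)
    (havoid : ¬ ∃ a0 a1, a0 ≠ a1 ∧ f a0 a0 = a0 ∧ f a0 a1 = a0 ∧ f a1 a0 = a1 ∧ f a1 a1 = a1) :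
    a = b := by
  by_contra hne
  exact havoid ⟨a, b, hne, ha a, ha b, hb a, hb b⟩

end LeftZero

theorem stmt_2_general {M : Type*} (f : M → M → M)
    (hUb : ∀ x y z : M, f (f x y) z = f x y) :
    (∀ x y z u : M, f x y = f z u) ↔
      (¬ ∃ a0 a1 : M, a0 ≠ a1 ∧ f a0 a0 = a0 ∧ f a0 a1 = a0 ∧ f a1 a0 = a1 ∧ f a1 a1 = a1) := by
  have leftZero_mul (x y : M) : IsLeftZero f (f x y) := hUb x y
  constructor
  · rintro hconst ⟨a, b, hne, haa, -, -, hbb⟩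
    exact hne (eq_of_idempotent_of_constant hconst haa hbb)
  · intro havoid x y z u
    exact (leftZero_mul x y).eq_of_avoids_leftZeroBand (leftZero_mul z u) havoid

theorem stmt_2 {M : Type*} (f : M → M → M)
    (hUa : ∀ x y z : M, f x y = f x z)
    (hUb : ∀ x y z : M, f (f x y) z = f x y)
    :
    (∀ x y z u : M, f x y = f z u) ↔
      (¬ ∃ a0 a1 : M, a0 ≠ a1 ∧ f a0 a0 = a0 ∧ f a0 a1 = a0 ∧ f a1 a0 = a1 ∧ f a1 a1 = a1) :=
  stmt_2_general f hUb
end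

section
/- Let M be a magma whose binary operation * satisfies the identities (x*y)*z = x*x, x*(y*z) = x*x (the variety L₁) and x*y = y*x (commutativity C) for all x,y,z. Then M satisfies x*y = z*u for all x,y,z,u (the identity Z) if and only if M avoids the 4-element magma Q whose Cayley table on {0,1,2,3} is: 1*2 = 2*1 = 3, and all other products equal 0. -/
/-!
`Q` is the free algebra on two generators of the variety `L₁ ∧ C`: all squares coincide, and so does
every product with a factor that is itself a product, so the only further element generated by `x`
and `y` is `x * y`. The homomorphism `Q → M` sending the generators to `x` and `y` is injective as
soon as `x * y` is not a square, because then neither `x` nor `y` can be a product. Hence in a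
magma avoiding `Q` every product equals the common square.
-/

open Function

/-- The four-element magma of the theorem, with the elements `0, 1, 2, 3` of its Cayley table
spelled out. -/
inductive Q
  | zero
  | one
  | two
  | three

instance : Mul Q where
  mul
    | .one, .two => .three
    | .two, .one => .three
    | _, _ => .zero

theorem ne_mul_of_mul_ne_mul_self {M : Type*} [Mul M] (hL : ∀ x y z : M, x * y * z = x * x)
    {x y : M} (hxy : x * y ≠ x * x) (u v : M) : x ≠ u * v := by
  rintro rfl
  exact hxy ((hL u v y).trans (hL u v (u * v)).symm)

section CommMagma

variable {M : Type*} [CommMagma M]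

theorem mul_self_eq_mul_self_of_mul_mul (hL : ∀ x y z : M, x * y * z = x * x) (x y : M) :
    x * x = y * y :=
  calc
    x * x = x * y * x := (hL x y x).symm
    _ = y * x * x := by rw [mul_comm x y]
    _ = y * y := hL y x x

theorem mul_mul_eq_mul_self (hL : ∀ x y z : M, x * y * z = x * x) (x y z w : M) :
    x * y * z = w * w :=
  (hL x y z).trans (mul_self_eq_mul_self_of_mul_mul hL x w)

/-- The homomorphism from `Q` determined by the images `x` and `y` of the generators `1` and `2`,
witnessing that `Q` is free on them. -/
def Q.lift (hL : ∀ x y z : M, x * y * z = x * x) (x y : M) : Q →ₙ* M where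
  toFun
    | zero => x * x
    | one => x
    | two => y
    | three => x * y
  map_mul' := by
    have product_mul (u v w : M) : x * x = u * v * w := (mul_mul_eq_mul_self hL u v w x).symm
    have mul_product (u v w : M) : x * x = w * (u * v) := by rw [mul_comm w, ← product_mul]
    rintro (_ | _ | _ | _) (_ | _ | _ | _)
    case one.one => rfl
    case one.two => rfl
    case two.one => exact mul_comm x y
    case two.two => exact mul_self_eq_mul_self_of_mul_mul hL x y
    all_goals first | exact product_mul _ _ _ | exact mul_product _ _ _

theorem Q.lift_injective (hL : ∀ x y z : M, x * y * z = x * x) {x y : M}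
    (hxy : x * y ≠ x * x) : Injective (Q.lift hL x y) := by
  have left_ne_mul : ∀ u v, x ≠ u * v := ne_mul_of_mul_ne_mul_self hL hxy
  have right_ne_mul : ∀ u v, y ≠ u * v :=
    ne_mul_of_mul_ne_mul_self hL (by rwa [mul_comm y x, mul_self_eq_mul_self_of_mul_mul hL y x])
  have left_ne_right : x ≠ y := by
    rintro rfl
    exact hxy rfl
  rintro (_ | _ | _ | _) (_ | _ | _ | _) heq
  case zero.zero | one.one | two.two | three.three => rfl
  case zero.one | three.one => exact absurd heq.symm (left_ne_mul _ _)
  case one.zero | one.three => exact absurd heq (left_ne_mul _ _)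
  case zero.two | three.two => exact absurd heq.symm (right_ne_mul _ _)
  case two.zero | two.three => exact absurd heq (right_ne_mul _ _)
  case one.two => exact absurd heq left_ne_right
  case two.one => exact absurd heq.symm left_ne_right
  case three.zero => exact absurd heq hxy
  case zero.three => exact absurd heq.symm hxy

theorem mul_eq_mul_of_forall_not_injective (hL : ∀ x y z : M, x * y * z = x * x)
    (hQ : ∀ φ : Q →ₙ* M, ¬ Injective φ) (x y z u : M) : x * y = z * u := by
  have mul_eq_mul_self (a b : M) : a * b = a * a :=
    not_not.mp fun hab => hQ (Q.lift hL a b) (Q.lift_injective hL hab)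
  rw [mul_eq_mul_self x y, mul_eq_mul_self z u, mul_self_eq_mul_self_of_mul_mul hL x z]

end CommMagma

theorem stmt_3 {M : Type*} (f : M → M → M)
    (hL1a : ∀ x y z : M, f (f x y) z = f x x)
    (hL1b : ∀ x y z : M, f x (f y z) = f x x)
    (hC : ∀ x y : M, f x y = f y x)
    :
    (∀ x y z u : M, f x y = f z u) ↔
      (¬ ∃ a0 a1 a2 a3 : M, a0 ≠ a1 ∧ a0 ≠ a2 ∧ a0 ≠ a3 ∧ a1 ≠ a2 ∧ a1 ≠ a3 ∧ a2 ≠ a3 ∧ f a0 a0 = a0 ∧ f a0 a1 = a0 ∧ f a0 a2 = a0 ∧ f a0 a3 = a0 ∧ f a1 a0 = a0 ∧ f a1 a1 = a0 ∧ f a1 a2 = a3 ∧ f a1 a3 = a0 ∧ f a2 a0 = a0 ∧ f a2 a1 = a3 ∧ f a2 a2 = a0 ∧ f a2 a3 = a0 ∧ f a3 a0 = a0 ∧ f a3 a1 = a0 ∧ f a3 a2 = a0 ∧ f a3 a3 = a0) := by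
  constructor
  · rintro h ⟨a0, a1, a2, a3, -, -, h03, -, -, -, h00, -, -, -, -, -, h12, -⟩
    exact h03 (h00.symm.trans ((h a0 a0 a1 a2).trans h12))
  · intro hQ
    let _ : CommMagma M := { mul := f, mul_comm := hC }
    refine mul_eq_mul_of_forall_not_injective hL1a fun φ hφ => hQ ?_
    have table (i j : Q) : f (φ i) (φ j) = φ (i * j) := (map_mul φ i j).symm
    exact ⟨φ .zero, φ .one, φ .two, φ .three,
      hφ.ne nofun, hφ.ne nofun, hφ.ne nofun, hφ.ne nofun, hφ.ne nofun, hφ.ne nofun,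
      table .zero .zero, table .zero .one, table .zero .two, table .zero .three,
      table .one .zero, table .one .one, table .one .two, table .one .three,
      table .two .zero, table .two .one, table .two .two, table .two .three,
      table .three .zero, table .three .one, table .three .two, table .three .three⟩
end

section
/- Let M be a magma whose binary operation * satisfies the identities x*y = x*z and (x*y)*z = x for all x,y,z (the variety Ũ). Then M satisfies x*y = x for all x,y (the left zero identity LZ) if and only if M avoids the 2-element magma N whose Cayley table on {0,1} is: 0*0 = 1, 0*1 = 1, 1*0 = 0, 1*1 = 0. -/
/-!
The two identities say exactly that `x * y = σ x` for an involution `σ`. Left zero means `σ = id`,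
and a copy of `N` is a two-element orbit `{a, σ a}`; an involution is the identity precisely when
it has no such orbit.
-/

section

variable {M : Type*} {f : M → M → M} {σ : M → M}

/-- The pair `(a₀, a₁)` is a copy in `(M, f)` of the two-element magma `N`, whose operation swaps
the left argument and ignores the right one; the entries are read row by row. -/
def IsCopyOfN (f : M → M → M) (a₀ a₁ : M) : Prop :=
  a₀ ≠ a₁ ∧ f a₀ a₀ = a₁ ∧ f a₀ a₁ = a₁ ∧ f a₁ a₀ = a₀ ∧ f a₁ a₁ = a₀

theorem exists_involutive_forall_eq (right_irrel : ∀ x y z, f x y = f x z)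
    (mul_mul_cancel : ∀ x y z, f (f x y) z = x) :
    ∃ σ : M → M, Function.Involutive σ ∧ ∀ x y, f x y = σ x :=
  ⟨fun x ↦ f x x, fun x ↦ mul_mul_cancel x x (f x x), fun x y ↦ right_irrel x y x⟩

theorem forall_eq_left_iff_forall_fixed (hf : ∀ x y, f x y = σ x) :
    (∀ x y, f x y = x) ↔ ∀ x, σ x = x :=
  ⟨fun h x ↦ (hf x x).symm.trans (h x x), fun h x y ↦ (hf x y).trans (h x)⟩

theorem isCopyOfN_iff_of_involutive (hσ : Function.Involutive σ) (hf : ∀ x y, f x y = σ x)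
    {a₀ a₁ : M} : IsCopyOfN f a₀ a₁ ↔ σ a₀ ≠ a₀ ∧ σ a₀ = a₁ := by
  simp only [IsCopyOfN, hf]
  constructor
  · rintro ⟨hne, rfl, -⟩
    exact ⟨hne.symm, rfl⟩
  · rintro ⟨hne, rfl⟩
    exact ⟨hne.symm, rfl, rfl, hσ a₀, hσ a₀⟩

end

theorem stmt_4 {M : Type*} (f : M → M → M)
    (hUta : ∀ x y z : M, f x y = f x z)
    (hUtb : ∀ x y z : M, f (f x y) z = x)
    :
    (∀ x y : M, f x y = x) ↔
      (¬ ∃ a0 a1 : M, a0 ≠ a1 ∧ f a0 a0 = a1 ∧ f a0 a1 = a1 ∧ f a1 a0 = a0 ∧ f a1 a1 = a0) := by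
  obtain ⟨σ, hσ, hf⟩ := exists_involutive_forall_eq hUta hUtb
  calc (∀ x y, f x y = x)
    _ ↔ ∀ x, σ x = x := forall_eq_left_iff_forall_fixed hf
    _ ↔ ¬ ∃ a₀ a₁, σ a₀ ≠ a₀ ∧ σ a₀ = a₁ := by simp
    _ ↔ ¬ ∃ a₀ a₁, IsCopyOfN f a₀ a₁ := by simp only [isCopyOfN_iff_of_involutive hσ hf]
end

section
/- Let M be a magma whose binary operation * satisfies the rectangular band identities (x*y)*z = x*(y*z) and x*(y*x) = x for all x,y,z (the variety RB). Then M satisfies x*y = x for all x,y (the left zero identity LZ) if and only if M avoids the 2-element right zero band 2_RZ, i.e. there do not exist distinct elements a,b of M with a*a = a, a*b = b, b*a = a, b*b = b. -/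
/-!
If `x * y ≠ x` in a rectangular band, then `x` and `x * y` form a copy of the two-element right zero
band: `x * (x * y) = x * y` by idempotence, and the relation `a * b = b` is symmetric.
-/

/-- The operation `f` makes `M` a rectangular band. Idempotence is not part of the definition, as it
follows from the two identities. -/
structure IsRectangularBand {M : Type*} (f : M → M → M) : Prop extends Std.Associative f where
  absorb (x y : M) : f x (f y x) = x

namespace IsRectangularBand

variable {M : Type*} {f : M → M → M}

theorem op_self (hf : IsRectangularBand f) (x : M) : f x x = x :=
  calc
    f x x = f x (f x (f x x)) := by rw [hf.absorb x x]
    _ = f x (f (f x x) x) := by rw [hf.assoc x x x]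
    _ = x := hf.absorb x (f x x)

theorem op_op_self_left (hf : IsRectangularBand f) (x y : M) : f x (f x y) = f x y := by
  rw [← hf.assoc, hf.op_self]

theorem op_eq_right_symm (hf : IsRectangularBand f) {a b : M} (hab : f a b = b) : f b a = a :=
  calc
    f b a = f (f a b) a := by rw [hab]
    _ = f a (f b a) := hf.assoc a b a
    _ = a := hf.absorb a b

end IsRectangularBand

theorem stmt_5 {M : Type*} (f : M → M → M)
    (hRBa : ∀ x y z : M, f (f x y) z = f x (f y z))
    (hRBb : ∀ x y : M, f x (f y x) = x)
    :
    (∀ x y : M, f x y = x) ↔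
      (¬ ∃ a0 a1 : M, a0 ≠ a1 ∧ f a0 a0 = a0 ∧ f a0 a1 = a1 ∧ f a1 a0 = a0 ∧ f a1 a1 = a1) := by
  have hf : IsRectangularBand f := { assoc := hRBa, absorb := hRBb }
  constructor
  · rintro hLZ ⟨a, b, hne, -, hab, -, -⟩
    exact hne ((hLZ a b).symm.trans hab)
  · intro hAvoids x y
    by_contra hne
    have hx : f x (f x y) = f x y := hf.op_op_self_left x y
    exact hAvoids ⟨x, f x y, Ne.symm hne, hf.op_self x, hx, hf.op_eq_right_symm hx, hf.op_self _⟩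
end

section
/- Let M be a magma whose binary operation * satisfies the identities x*y = x*z and (x*y)*z = x*y for all x,y,z (the variety U). Then M satisfies x*y = x for all x,y (the left zero identity LZ) if and only if M avoids the 2-element null semigroup 2_N, i.e. there do not exist distinct elements a,b of M with a*a = a, a*b = a, b*a = a, b*b = a. -/
/-!
In the variety `U` the product has the form `x * y = e x` with `e` idempotent, and the left zero
identity says that `e` is the identity map. If `e` moves some `x`, then `e x` and `x` are distinct
and all four of their products equal `e x`, so they form a copy of the null semigroup.
-/

section NullPair

variable {M : Type*} {f : M → M → M}

theorem isNullPair_op_left_of_ne (hconst : ∀ x y z : M, f x y = f x z)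
    (habsorb : ∀ x y z : M, f (f x y) z = f x y) {x y : M} (hne : f x y ≠ x) :
    IsNullPair f (f x y) x :=
  ⟨hne, habsorb x y (f x y), habsorb x y x, hconst x (f x y) y, hconst x x y⟩

end NullPair

theorem stmt_6 {M : Type*} (f : M → M → M)
    (hUa : ∀ x y z : M, f x y = f x z)
    (hUb : ∀ x y z : M, f (f x y) z = f x y)
    :
    (∀ x y : M, f x y = x) ↔
      (¬ ∃ a0 a1 : M, a0 ≠ a1 ∧ f a0 a0 = a0 ∧ f a0 a1 = a0 ∧ f a1 a0 = a0 ∧ f a1 a1 = a0) := by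
  change _ ↔ ¬ ∃ a b : M, IsNullPair f a b
  constructor
  · rintro hLZ ⟨a, b, hab⟩
    exact hab.op_self_ne (hLZ b b)
  · intro havoid x y
    by_contra hne
    exact havoid ⟨f x y, x, isNullPair_op_left_of_ne hUa hUb hne⟩
end

section
/- Let M be a magma whose binary operation * satisfies the identities (x*y)*z = x*x, x*(y*z) = x*x (the variety L₁) and x*x = y*y (the identity D) for all x,y,z. Then M satisfies x*y = y*x for all x,y (commutativity C) if and only if M avoids both the 4-element magma F with Cayley table on {0,1,2,3} given by 1*2 = 3 and all other products equal to 0, and the 5-element magma G with Cayley table on {0,1,2,3,4} given by 1*2 = 3, 2*1 = 4, and all other products equal to 0. -/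
/-!
By `L₁` and `D` all squares are one element `e`, and a product having a product as a factor is `e`;
hence `e` is a zero. If `x * y ≠ e`, then neither `x` nor `y` is a product, and `x ≠ y`. So a
noncommuting pair `x, y` generates a submagma with elements `e, x, y, x * y, y * x`, which is a copy
of `F` when one of `x * y` and `y * x` is `e`, and a copy of `G` otherwise.
-/

open Function

section

variable {M ι : Type*} {f : M → M → M} {e x y : M}

/-- The magma `(M, f)` contains a copy of the magma on `ι` with Cayley table `t`. -/
def HasCopy (f : M → M → M) (t : ι → ι → ι) : Prop :=
  ∃ a : ι → M, Injective a ∧ ∀ i j, f (a i) (a j) = a (t i j)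

theorem hasCopy_fin_four_iff {t : Fin 4 → Fin 4 → Fin 4} :
    HasCopy f t ↔ ∃ a₀ a₁ a₂ a₃, Injective ![a₀, a₁, a₂, a₃] ∧
      ∀ i j, f (![a₀, a₁, a₂, a₃] i) (![a₀, a₁, a₂, a₃] j) = ![a₀, a₁, a₂, a₃] (t i j) :=
  (FinVec.exists_iff _).symm

theorem hasCopy_fin_five_iff {t : Fin 5 → Fin 5 → Fin 5} :
    HasCopy f t ↔ ∃ a₀ a₁ a₂ a₃ a₄, Injective ![a₀, a₁, a₂, a₃, a₄] ∧
      ∀ i j, f (![a₀, a₁, a₂, a₃, a₄] i) (![a₀, a₁, a₂, a₃, a₄] j) =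
        ![a₀, a₁, a₂, a₃, a₄] (t i j) :=
  (FinVec.exists_iff _).symm

/-- The Cayley table of the magma `F`, whose only nonzero product is `1 * 2 = 3`. -/
def tableF : Fin 4 → Fin 4 → Fin 4
  | 1, 2 => 3
  | _, _ => 0

/-- The Cayley table of the magma `G`, whose only nonzero products are `1 * 2 = 3` and
`2 * 1 = 4`. -/
def tableG : Fin 5 → Fin 5 → Fin 5
  | 1, 2 => 3
  | 2, 1 => 4
  | _, _ => 0

theorem HasCopy.comm {t : ι → ι → ι} (ht : HasCopy f t) (hf : ∀ x y, f x y = f y x) (i j : ι) :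
    t i j = t j i := by
  obtain ⟨a, ha_inj, ha⟩ := ht
  exact ha_inj (by rw [← ha, ← ha, hf])

theorem not_hasCopy_tableF_of_comm (hf : ∀ x y, f x y = f y x) : ¬ HasCopy f tableF :=
  fun h ↦ absurd (h.comm hf 1 2) (by decide)

theorem not_hasCopy_tableG_of_comm (hf : ∀ x y, f x y = f y x) : ¬ HasCopy f tableG :=
  fun h ↦ absurd (h.comm hf 1 2) (by decide)

/-- The operation `f` is nilpotent of class two and alternating, with zero element `e`: squares and
triple products, however bracketed, equal `e`. This is what the identities `L₁` and `D` amount to on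
a nonempty magma. -/
structure IsAlternatingNilTwo (f : M → M → M) (e : M) : Prop where
  mul_self (x : M) : f x x = e
  mul_mul_left (x y z : M) : f (f x y) z = e
  mul_mul_right (x y z : M) : f x (f y z) = e

namespace IsAlternatingNilTwo

theorem of_identities (hL1a : ∀ x y z, f (f x y) z = f x x) (hL1b : ∀ x y z, f x (f y z) = f x x)
    (hD : ∀ x y, f x x = f y y) (x : M) : IsAlternatingNilTwo f (f x x) where
  mul_self y := hD y x
  mul_mul_left y z w := (hL1a y z w).trans (hD y x)
  mul_mul_right y z w := (hL1b y z w).trans (hD y x)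

theorem zero_mul (h : IsAlternatingNilTwo f e) (x : M) : f e x = e := by
  simpa only [h.mul_self] using h.mul_mul_left x x x

theorem mul_zero (h : IsAlternatingNilTwo f e) (x : M) : f x e = e := by
  simpa only [h.mul_self] using h.mul_mul_right x x x

theorem left_ne_mul (h : IsAlternatingNilTwo f e) (hxy : f x y ≠ e) (u v : M) : x ≠ f u v := by
  rintro rfl
  exact hxy (h.mul_mul_left u v y)

theorem right_ne_mul (h : IsAlternatingNilTwo f e) (hxy : f x y ≠ e) (u v : M) : y ≠ f u v := by
  rintro rfl
  exact hxy (h.mul_mul_right x u v)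

theorem left_ne_zero (h : IsAlternatingNilTwo f e) (hxy : f x y ≠ e) : x ≠ e :=
  h.mul_self x ▸ h.left_ne_mul hxy x x

theorem right_ne_zero (h : IsAlternatingNilTwo f e) (hxy : f x y ≠ e) : y ≠ e :=
  h.mul_self x ▸ h.right_ne_mul hxy x x

theorem left_ne_right (h : IsAlternatingNilTwo f e) (hxy : f x y ≠ e) : x ≠ y := by
  rintro rfl
  exact hxy (h.mul_self x)

theorem hasCopy_tableF (h : IsAlternatingNilTwo f e) (hxy : f x y ≠ e) (hyx : f y x = e) :
    HasCopy f tableF := by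
  refine ⟨![e, x, y, f x y], ?_, ?_⟩
  · simp [← List.nodup_ofFn, (h.left_ne_zero hxy).symm, (h.right_ne_zero hxy).symm, hxy.symm,
      h.left_ne_right hxy, h.left_ne_mul hxy, h.right_ne_mul hxy]
  · simp [Fin.forall_fin_succ, tableF, h.mul_self, h.mul_mul_left, h.mul_mul_right, h.zero_mul,
      h.mul_zero, hyx]

theorem hasCopy_tableG (h : IsAlternatingNilTwo f e) (hxy : f x y ≠ e) (hyx : f y x ≠ e)
    (hne : f x y ≠ f y x) : HasCopy f tableG := by
  refine ⟨![e, x, y, f x y, f y x], ?_, ?_⟩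
  · simp [← List.nodup_ofFn, (h.left_ne_zero hxy).symm, (h.right_ne_zero hxy).symm, hxy.symm,
      hyx.symm, hne, h.left_ne_right hxy, h.left_ne_mul hxy, h.right_ne_mul hxy]
  · simp [Fin.forall_fin_succ, tableG, h.mul_self, h.mul_mul_left, h.mul_mul_right, h.zero_mul,
      h.mul_zero]

theorem hasCopy_of_mul_ne_mul (h : IsAlternatingNilTwo f e) (hne : f x y ≠ f y x) :
    HasCopy f tableF ∨ HasCopy f tableG := by
  by_cases hxy : f x y = e
  · exact .inl (h.hasCopy_tableF (hxy ▸ hne.symm) hxy)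
  by_cases hyx : f y x = e
  · exact .inl (h.hasCopy_tableF hxy hyx)
  · exact .inr (h.hasCopy_tableG hxy hyx hne)

end IsAlternatingNilTwo

theorem comm_iff_not_hasCopy (hL1a : ∀ x y z, f (f x y) z = f x x)
    (hL1b : ∀ x y z, f x (f y z) = f x x) (hD : ∀ x y, f x x = f y y) :
    (∀ x y, f x y = f y x) ↔ ¬ HasCopy f tableF ∧ ¬ HasCopy f tableG := by
  refine ⟨fun hf ↦ ⟨not_hasCopy_tableF_of_comm hf, not_hasCopy_tableG_of_comm hf⟩, ?_⟩
  rintro ⟨hF, hG⟩ x y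
  by_contra hne
  exact ((IsAlternatingNilTwo.of_identities hL1a hL1b hD x).hasCopy_of_mul_ne_mul hne).elim hF hG

end

theorem stmt_9 {M : Type*} (f : M → M → M)
    (hL1a : ∀ x y z : M, f (f x y) z = f x x)
    (hL1b : ∀ x y z : M, f x (f y z) = f x x)
    (hD : ∀ x y : M, f x x = f y y)
    :
    (∀ x y : M, f x y = f y x) ↔
      (¬ ∃ a0 a1 a2 a3 : M, a0 ≠ a1 ∧ a0 ≠ a2 ∧ a0 ≠ a3 ∧ a1 ≠ a2 ∧ a1 ≠ a3 ∧ a2 ≠ a3 ∧ f a0 a0 = a0 ∧ f a0 a1 = a0 ∧ f a0 a2 = a0 ∧ f a0 a3 = a0 ∧ f a1 a0 = a0 ∧ f a1 a1 = a0 ∧ f a1 a2 = a3 ∧ f a1 a3 = a0 ∧ f a2 a0 = a0 ∧ f a2 a1 = a0 ∧ f a2 a2 = a0 ∧ f a2 a3 = a0 ∧ f a3 a0 = a0 ∧ f a3 a1 = a0 ∧ f a3 a2 = a0 ∧ f a3 a3 = a0) ∧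
      (¬ ∃ a0 a1 a2 a3 a4 : M, a0 ≠ a1 ∧ a0 ≠ a2 ∧ a0 ≠ a3 ∧ a0 ≠ a4 ∧ a1 ≠ a2 ∧ a1 ≠ a3 ∧ a1 ≠ a4 ∧ a2 ≠ a3 ∧ a2 ≠ a4 ∧ a3 ≠ a4 ∧ f a0 a0 = a0 ∧ f a0 a1 = a0 ∧ f a0 a2 = a0 ∧ f a0 a3 = a0 ∧ f a0 a4 = a0 ∧ f a1 a0 = a0 ∧ f a1 a1 = a0 ∧ f a1 a2 = a3 ∧ f a1 a3 = a0 ∧ f a1 a4 = a0 ∧ f a2 a0 = a0 ∧ f a2 a1 = a4 ∧ f a2 a2 = a0 ∧ f a2 a3 = a0 ∧ f a2 a4 = a0 ∧ f a3 a0 = a0 ∧ f a3 a1 = a0 ∧ f a3 a2 = a0 ∧ f a3 a3 = a0 ∧ f a3 a4 = a0 ∧ f a4 a0 = a0 ∧ f a4 a1 = a0 ∧ f a4 a2 = a0 ∧ f a4 a3 = a0 ∧ f a4 a4 = a0) := by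
  rw [comm_iff_not_hasCopy hL1a hL1b hD, hasCopy_fin_four_iff, hasCopy_fin_five_iff]
  simp [tableF, tableG, ← List.nodup_ofFn, Fin.forall_fin_succ, and_assoc]
end

section
/- Let M be a magma whose binary operation * satisfies the identities (x*y)*z = x*x and x*(y*z) = x*y for all x,y,z (the variety L₂). Then M satisfies the identities x*y = x*z and (x*y)*z = x*y for all x,y,z (the variety U) if and only if M avoids the 4-element magma E with Cayley table on {0,1,2,3} (rows indexed by left factor): row 0 = (2,3,2,2), row 1 = (1,1,1,1), row 2 = (2,2,2,2), row 3 = (2,2,2,2). -/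
/-!
If `x * y ≠ x * x` in a magma of the variety L₂, then `x, y * y, x * x, x * y` is a copy of `E`.
Indeed its sixteen products are instances of the two identities. Moreover `x` is not a product,
because a product `u * v` sends every right factor to `u * u`, and `y * y` is not of the form
`x * z`, because `x * (y * y) = x * y` while `x * (x * z) = x * x`. Hence avoiding `E` amounts to
`x * y = x * x`, which within L₂ is the same as belonging to U.
-/

theorem injective_vec_four_iff {α : Type*} {a b c d : α} :
    Function.Injective ![a, b, c, d] ↔ a ≠ b ∧ a ≠ c ∧ a ≠ d ∧ b ≠ c ∧ b ≠ d ∧ c ≠ d := by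
  simp [← List.nodup_ofFn, and_assoc]

/-- The magma `(X, g)` embeds into the magma `(M, f)`. For a Cayley table `g` on `Fin n`, this says
that `(M, f)` contains a copy of that table; its negation says that `(M, f)` avoids it. -/
def ContainsCopy {X M : Type*} (g : X → X → X) (f : M → M → M) : Prop :=
  ∃ a : X → M, Function.Injective a ∧ ∀ i j, f (a i) (a j) = a (g i j)

/-- The operation of the four-element magma `E`, encoded by the rows of its Cayley table. -/
def opE : Fin 4 → Fin 4 → Fin 4 :=
  ![![2, 3, 2, 2], ![1, 1, 1, 1], ![2, 2, 2, 2], ![2, 2, 2, 2]]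

section

variable {M : Type*} {f : M → M → M}

theorem ContainsCopy.op_eq_op {X : Type*} {g : X → X → X} (hcopy : ContainsCopy g f)
    (hf : ∀ x y z, f x y = f x z) (i j k : X) : g i j = g i k := by
  obtain ⟨a, ha_inj, ha⟩ := hcopy
  exact ha_inj <| by rw [← ha, ← ha, hf]

theorem not_containsCopy_opE_of_op_eq_op (hf : ∀ x y z, f x y = f x z) : ¬ ContainsCopy opE f :=
  fun hcopy => absurd (hcopy.op_eq_op hf 0 0 1) (by decide)

theorem op_op_eq_op_op_self (ha : ∀ x y z, f (f x y) z = f x x) (u v y : M) :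
    f (f u v) y = f (f u v) (f u v) :=
  (ha u v y).trans (ha u v (f u v)).symm

theorem op_eq_op_self_of_op_eq_op (hb : ∀ x y z, f x (f y z) = f x y) {x y z w : M}
    (h : f y w = f x z) : f x y = f x x :=
  calc
    f x y = f x (f y w) := (hb x y w).symm
    _ = f x (f x z) := by rw [h]
    _ = f x x := hb x x z

theorem containsCopy_opE_of_op_ne_op_self (ha : ∀ x y z, f (f x y) z = f x x)
    (hb : ∀ x y z, f x (f y z) = f x y) {x y : M} (hxy : f x y ≠ f x x) :
    ContainsCopy opE f := by
  have hx_not_op (u v : M) : x ≠ f u v := by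
    rintro rfl
    exact hxy (op_op_eq_op_op_self ha u v y)
  have hyy_ne (z : M) : f y y ≠ f x z := fun h => hxy (op_eq_op_self_of_op_eq_op hb h)
  refine ⟨![x, f y y, f x x, f x y], ?_, ?_⟩
  · exact injective_vec_four_iff.mpr
      ⟨hx_not_op _ _, hx_not_op _ _, hx_not_op _ _, hyy_ne x, hyy_ne y, hxy.symm⟩
  · simp [Fin.forall_fin_succ, opE, ha, hb]

theorem not_containsCopy_opE_iff (ha : ∀ x y z, f (f x y) z = f x x)
    (hb : ∀ x y z, f x (f y z) = f x y) :
    ¬ ContainsCopy opE f ↔ ∀ x y, f x y = f x x := by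
  refine ⟨fun havoid x y => ?_, fun h => not_containsCopy_opE_of_op_eq_op fun x y z => ?_⟩
  · by_contra hxy
    exact havoid (containsCopy_opE_of_op_ne_op_self ha hb hxy)
  · rw [h x y, h x z]

theorem op_eq_op_and_op_op_eq_op_iff (ha : ∀ x y z, f (f x y) z = f x x) :
    ((∀ x y z, f x y = f x z) ∧ ∀ x y z, f (f x y) z = f x y) ↔ ∀ x y, f x y = f x x := by
  refine ⟨fun ⟨h, _⟩ x y => h x y x, fun h => ⟨fun x y z => ?_, fun x y z => ?_⟩⟩
  · rw [h x y, h x z]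
  · rw [ha, h x y]

theorem containsCopy_opE_iff_exists :
    ContainsCopy opE f ↔
      ∃ a0 a1 a2 a3 : M,
        a0 ≠ a1 ∧ a0 ≠ a2 ∧ a0 ≠ a3 ∧ a1 ≠ a2 ∧ a1 ≠ a3 ∧ a2 ≠ a3 ∧
        f a0 a0 = a2 ∧ f a0 a1 = a3 ∧ f a0 a2 = a2 ∧ f a0 a3 = a2 ∧
        f a1 a0 = a1 ∧ f a1 a1 = a1 ∧ f a1 a2 = a1 ∧ f a1 a3 = a1 ∧
        f a2 a0 = a2 ∧ f a2 a1 = a2 ∧ f a2 a2 = a2 ∧ f a2 a3 = a2 ∧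
        f a3 a0 = a2 ∧ f a3 a1 = a2 ∧ f a3 a2 = a2 ∧ f a3 a3 = a2 := by
  rw [ContainsCopy, ← FinVec.exists_iff]
  simp [FinVec.Exists, injective_vec_four_iff, Fin.forall_fin_succ, opE, and_assoc]

end

theorem stmt_11 {M : Type*} (f : M → M → M)
    (hL2a : ∀ x y z : M, f (f x y) z = f x x)
    (hL2b : ∀ x y z : M, f x (f y z) = f x y)
    :
    ((∀ x y z : M, f x y = f x z) ∧ (∀ x y z : M, f (f x y) z = f x y)) ↔
      (¬ ∃ a0 a1 a2 a3 : M, a0 ≠ a1 ∧ a0 ≠ a2 ∧ a0 ≠ a3 ∧ a1 ≠ a2 ∧ a1 ≠ a3 ∧ a2 ≠ a3 ∧ f a0 a0 = a2 ∧ f a0 a1 = a3 ∧ f a0 a2 = a2 ∧ f a0 a3 = a2 ∧ f a1 a0 = a1 ∧ f a1 a1 = a1 ∧ f a1 a2 = a1 ∧ f a1 a3 = a1 ∧ f a2 a0 = a2 ∧ f a2 a1 = a2 ∧ f a2 a2 = a2 ∧ f a2 a3 = a2 ∧ f a3 a0 = a2 ∧ f a3 a1 = a2 ∧ f a3 a2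 = a2 ∧ f a3 a3 = a2) := by
  rw [← containsCopy_opE_iff_exists, op_eq_op_and_op_op_eq_op_iff hL2a,
    not_containsCopy_opE_iff hL2a hL2b]
end

section
/- Let M be a magma whose binary operation * satisfies the identities (x*y)*z = x*z and x*(y*z) = x*x for all x,y,z (the variety L₄). Then M satisfies the identities x*y = x*z and (x*y)*z = x*y for all x,y,z (the variety U) if and only if M avoids the 4-element magma D with Cayley table on {0,1,2,3} (rows indexed by left factor): row 0 = (0,2,0,0), row 1 = (3,3,3,3), row 2 = (0,2,0,0), row 3 = (3,3,3,3). -/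
/-!
By `(x * y) * z = x * z`, a product `x * y` determines the left translation of `x`; by
`x * (y * z) = x * x`, all products look alike as right factors. Hence, if `x * y ≠ x * x`, then
`y` is not a product, and no product `x * u` equals a product `y * v`. So `x * x`, `y`, `x * y`,
`y * y` are pairwise distinct, and the two identities force the multiplication table of `D` on them.
-/

section

variable {M : Type*} {f : M → M → M} {x y : M}

theorem left_translation_eq_of_op_eq_op (hL4a : ∀ x y z : M, f (f x y) z = f x z) {u v : M}
    (h : f x u = f y v) : f x = f y := by
  funext z
  rw [← hL4a x u z, h, hL4a]

theorem op_eq_op_self_of_left_translation_eq (hL4b : ∀ x y z : M, f x (f y z) = f x x)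
    (h : f x = f y) : f x y = f x x :=
  calc
    f x y = f y y := congrFun h y
    _ = f y (f x x) := (hL4b y x x).symm
    _ = f x (f x x) := (congrFun h (f x x)).symm
    _ = f x x := hL4b x x x

theorem op_ne_of_op_ne_op_self (hL4b : ∀ x y z : M, f x (f y z) = f x x)
    (hxy : f x y ≠ f x x) (u v : M) : f u v ≠ y := by
  rintro rfl
  exact hxy (hL4b x u v)

theorem op_ne_op_of_op_ne_op_self (hL4a : ∀ x y z : M, f (f x y) z = f x z)
    (hL4b : ∀ x y z : M, f x (f y z) = f x x) (hxy : f x y ≠ f x x) (u v : M) :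
    f x u ≠ f y v := fun h ↦
  hxy (op_eq_op_self_of_left_translation_eq hL4b (left_translation_eq_of_op_eq_op hL4a h))

theorem op_right_irrel_and_op_op_eq_op_iff (hL4a : ∀ x y z : M, f (f x y) z = f x z) :
    ((∀ x y z : M, f x y = f x z) ∧ ∀ x y z : M, f (f x y) z = f x y) ↔
      ∀ x y : M, f x y = f x x := by
  refine ⟨fun h x y ↦ h.1 x y x, fun h ↦ ?_⟩
  have op_right_irrel (x y z : M) : f x y = f x z := (h x y).trans (h x z).symm
  exact ⟨op_right_irrel, fun x y z ↦ (hL4a x y z).trans (op_right_irrel x z y)⟩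

end

theorem stmt_13 {M : Type*} (f : M → M → M)
    (hL4a : ∀ x y z : M, f (f x y) z = f x z)
    (hL4b : ∀ x y z : M, f x (f y z) = f x x)
    :
    ((∀ x y z : M, f x y = f x z) ∧ (∀ x y z : M, f (f x y) z = f x y)) ↔
      (¬ ∃ a0 a1 a2 a3 : M, a0 ≠ a1 ∧ a0 ≠ a2 ∧ a0 ≠ a3 ∧ a1 ≠ a2 ∧ a1 ≠ a3 ∧ a2 ≠ a3 ∧ f a0 a0 = a0 ∧ f a0 a1 = a2 ∧ f a0 a2 = a0 ∧ f a0 a3 = a0 ∧ f a1 a0 = a3 ∧ f a1 a1 = a3 ∧ f a1 a2 = a3 ∧ f a1 a3 = a3 ∧ f a2 a0 = a0 ∧ f a2 a1 = a2 ∧ f a2 a2 = a0 ∧ f a2 a3 = a0 ∧ f a3 a0 = a3 ∧ f a3 a1 = a3 ∧ f a3 a2 = a3 ∧ f a3 a3 = a3) := by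
  rw [op_right_irrel_and_op_op_eq_op_iff hL4a]
  constructor
  · rintro h ⟨a0, a1, a2, -, -, h02, -, -, -, -, h00, h01, -⟩
    exact h02 (h00.symm.trans ((h a0 a1).symm.trans h01))
  · intro avoids_D x y
    by_contra hxy
    have ne_y := op_ne_of_op_ne_op_self hL4b hxy
    have ne_op := op_ne_op_of_op_ne_op_self hL4a hL4b hxy
    refine avoids_D ⟨f x x, y, f x y, f y y, ne_y x x, Ne.symm hxy, ne_op x y,
      (ne_y x y).symm, (ne_y y y).symm, ne_op y y, ?_⟩
    simp only [hL4a, hL4b, and_self]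
end

section
/- Let M be a magma whose binary operation * satisfies the identities (x*y)*z = x*z and x*(y*z) = x*z for all x,y,z (the variety L₇). Then M satisfies the identities x*y = x*z and (x*y)*z = x*y for all x,y,z (the variety U) if and only if M avoids the 2-element right zero band 2_RZ, i.e. there do not exist distinct elements a,b of M with a*a = a, a*b = b, b*a = a, b*b = b. -/
/-!
The row of `x` consists of the products `x * y`. The identity `(x * y) * (x * z) = x * z`, which
follows from those of L₇, says that within each row the operation is the second projection, so any
two distinct elements of a row form a copy of 2_RZ. Hence avoiding 2_RZ forces every row to be a
single element, and conversely the row of an element of a copy of 2_RZ contains both its elements.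
-/

/-- The distinct elements `a`, `b` form a copy of the two-element right zero band 2_RZ in the magma
`(M, f)`, with `a` and `b` in the roles of `0` and `1`. -/
def IsRightZeroPair {M : Type*} (f : M → M → M) (a b : M) : Prop :=
  a ≠ b ∧ f a a = a ∧ f a b = b ∧ f b a = a ∧ f b b = b

section Magma

variable {M : Type*} {f : M → M → M}

theorem IsRightZeroPair.not_forall_apply_eq {a b : M} (hab : IsRightZeroPair f a b) :
    ¬ ∀ y z, f a y = f a z := by
  obtain ⟨hne, haa, hab, -, -⟩ := hab
  intro hconst
  exact hne <| calc
    a = f a a := haa.symm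
    _ = f a b := hconst a b
    _ = b := hab

theorem isRightZeroPair_of_apply_ne {x y z : M} (hx : ∀ y z, f (f x y) (f x z) = f x z)
    (hne : f x y ≠ f x z) : IsRightZeroPair f (f x y) (f x z) :=
  ⟨hne, hx y y, hx y z, hx z y, hx z z⟩

theorem forall_apply_eq_iff_not_exists_isRightZeroPair
    (hf : ∀ x y z, f (f x y) (f x z) = f x z) :
    (∀ x y z, f x y = f x z) ↔ ¬ ∃ a b, IsRightZeroPair f a b := by
  constructor
  · rintro hconst ⟨a, b, hab⟩
    exact hab.not_forall_apply_eq (hconst a)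
  · intro havoid x y z
    by_contra hne
    exact havoid ⟨f x y, f x z, isRightZeroPair_of_apply_ne (hf x) hne⟩

theorem apply_apply_left_eq (hf : ∀ x y z, f (f x y) (f x z) = f x z)
    (hconst : ∀ x y z, f x y = f x z) (x y z : M) : f (f x y) z = f x y :=
  calc
    f (f x y) z = f (f x y) (f x y) := hconst (f x y) z (f x y)
    _ = f x y := hf x y y

end Magma

theorem stmt_16_general {M : Type*} (f : M → M → M)
    (hf : ∀ x y z : M, f (f x y) (f x z) = f x z) :
    ((∀ x y z : M, f x y = f x z) ∧ (∀ x y z : M, f (f x y) z = f x y)) ↔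
      ¬ ∃ a b : M, IsRightZeroPair f a b :=
  (and_iff_left_of_imp (apply_apply_left_eq hf)).trans
    (forall_apply_eq_iff_not_exists_isRightZeroPair hf)

theorem stmt_16 {M : Type*} (f : M → M → M)
    (hL7a : ∀ x y z : M, f (f x y) z = f x z)
    (hL7b : ∀ x y z : M, f x (f y z) = f x z)
    :
    ((∀ x y z : M, f x y = f x z) ∧ (∀ x y z : M, f (f x y) z = f x y)) ↔
      (¬ ∃ a0 a1 : M, a0 ≠ a1 ∧ f a0 a0 = a0 ∧ f a0 a1 = a1 ∧ f a1 a0 = a0 ∧ f a1 a1 = a1) :=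
  stmt_16_general f fun x y z => (hL7a x y (f x z)).trans (hL7b x x z)
end
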